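/- arXiv:math/0402068 — 4 statements merged into one kernel-verified Lean document; each statement's English description precedes it below -/
import Mathlib

section
/- Let k be a natural number. Let R = MvPolynomial (Fin k) ℝ be the polynomial algebra in variables X₁, …, X_k, let Λ = ExteriorAlgebra ℝ (Fin k → ℝ) be the exterior algebra on ℝᵏ with standard basis e₁, …, e_k, and let T = Λ ⊗_ℝ R be the tensor product ℝ-algebra. Set ω = Σ_{i=1}^{k} (ι e_i) ⊗ X_i ∈ T and let L : T → T be the ℝ-linear map of left multiplication by ω. Then: (i) L ∘ L = 0, so the range of L is contained in the kernel of L; (ii) the element (ι e₁ · ι e₂ ⋯ ι e_k) ⊗ 1 lies in ker L but not in range L; (iii) ker L = range L + ℝ · ((ι e₁ · ι e₂ ⋯ ι e_k) ⊗ 1); consequently the quotient real vector space ker L / range L is one-dimensional, spanned by the class of (ι e₁ ⋯ ι e_k) ⊗ 1. -/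
open scoped TensorProduct

set_option synthInstance.maxHeartbeats 1000000
set_option maxHeartbeats 1000000

/-- The Koszul-type element `ω = Σᵢ (ι eᵢ) ⊗ Xᵢ` of `Λ(ℝᵏ) ⊗ ℝ[X₁,…,X_k]`. -/
noncomputable def koszulElt (k : ℕ) :
    ExteriorAlgebra ℝ (Fin k → ℝ) ⊗[ℝ] MvPolynomial (Fin k) ℝ :=
  ∑ i : Fin k, (ExteriorAlgebra.ι ℝ (Pi.single i 1 : Fin k → ℝ)) ⊗ₜ[ℝ] MvPolynomial.X i

/-- Left multiplication by `koszulElt k` (the Berezinian differential `d_V`). -/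
noncomputable def koszulMul (k : ℕ) :
    ExteriorAlgebra ℝ (Fin k → ℝ) ⊗[ℝ] MvPolynomial (Fin k) ℝ →ₗ[ℝ]
      ExteriorAlgebra ℝ (Fin k → ℝ) ⊗[ℝ] MvPolynomial (Fin k) ℝ :=
  LinearMap.mulLeft ℝ (koszulElt k)

/-- The top exterior product `(ι e₁ ⋯ ι e_k) ⊗ 1`. -/
noncomputable def koszulTop (k : ℕ) :
    ExteriorAlgebra ℝ (Fin k → ℝ) ⊗[ℝ] MvPolynomial (Fin k) ℝ :=
  ((List.ofFn fun i : Fin k =>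
    ExteriorAlgebra.ι ℝ (Pi.single i 1 : Fin k → ℝ)).prod) ⊗ₜ[ℝ] 1

namespace BerAux

open ExteriorAlgebra MvPolynomial

noncomputable def e (k : ℕ) (i : Fin k) : Fin k → ℝ := Pi.single i 1

noncomputable def con (k : ℕ) (i : Fin k) :
    ExteriorAlgebra ℝ (Fin k → ℝ) →ₗ[ℝ] ExteriorAlgebra ℝ (Fin k → ℝ) :=
  CliffordAlgebra.contractLeft (Q := (0 : QuadraticForm ℝ (Fin k → ℝ))) (LinearMap.proj i)

lemma con_one (k : ℕ) (i : Fin k) : con k i 1 = 0 :=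
  CliffordAlgebra.contractLeft_one _ _

lemma con_mul (k : ℕ) (i : Fin k) (v : Fin k → ℝ) (a : ExteriorAlgebra ℝ (Fin k → ℝ)) :
    con k i (ι ℝ v * a) = v i • a - ι ℝ v * con k i a :=
  CliffordAlgebra.contractLeft_ι_mul (Q := (0 : QuadraticForm ℝ (Fin k → ℝ))) (d := LinearMap.proj i) v a

lemma anti {k : ℕ} (v w : Fin k → ℝ) : ι ℝ v * ι ℝ w = - (ι ℝ w * ι ℝ v) :=
  eq_neg_of_add_eq_zero_left (ι_add_mul_swap v w)

lemma sum_e {k : ℕ} (v : Fin k → ℝ) : ∑ i, v i • ι ℝ (e k i) = ι ℝ v := by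
  simp only [← map_smul, ← map_sum]
  congr 1
  ext j
  simp [e, Finset.sum_apply, Pi.single_apply]

lemma num_mul (k p : ℕ) (v : Fin p → Fin k → ℝ) :
    ∑ i, ι ℝ (e k i) * con k i (ιMulti ℝ p v) = (p : ℝ) • ιMulti ℝ p v := by
  induction p with
  | zero => simp [con_one]
  | succ p ih =>
    rw [ιMulti_succ_apply]
    have h := ih (Matrix.vecTail v)
    set a := ιMulti ℝ p (Matrix.vecTail v)
    have : ∀ i, ι ℝ (e k i) * con k i (ι ℝ (v 0) * a)
        = (v 0 i • ι ℝ (e k i)) * a + ι ℝ (v 0) * (ι ℝ (e k i) * con k i a) := by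
      intro i
      rw [con_mul, mul_sub, ← mul_assoc, anti (e k i) (v 0)]
      simp [mul_assoc]
    simp only [this]
    rw [Finset.sum_add_distrib, ← Finset.sum_mul, ← Finset.mul_sum, h, sum_e]
    push_cast
    rw [add_smul, one_smul, mul_smul_comm, add_comm]

lemma top_zero (k p : ℕ) (h : k < p) (v : Fin p → Fin k → ℝ) : ιMulti ℝ p v = 0 := by
  apply AlternatingMap.map_linearDependent
  intro hv
  have := hv.fintype_card_le_finrank
  simp at this
  omega

noncomputable def tp (k : ℕ) : ExteriorAlgebra ℝ (Fin k → ℝ) := ιMulti ℝ k (e k)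

lemma top_det (k : ℕ) (v : Fin k → Fin k → ℝ) :
    ιMulti ℝ k v = ((Pi.basisFun ℝ (Fin k)).det v) • tp k := by
  have : ιMulti ℝ k = (LinearMap.toSpanSingleton ℝ _ (tp k)).compAlternatingMap
      (Pi.basisFun ℝ (Fin k)).det := by
    refine Module.Basis.ext_alternating (Pi.basisFun ℝ (Fin k)) fun w hw => ?_
    obtain ⟨σ, rfl⟩ : ∃ σ : Equiv.Perm (Fin k), w = σ :=
      ⟨Equiv.ofBijective w (Finite.injective_iff_bijective.1 hw), rfl⟩
    have h1 := (ιMulti ℝ k).map_perm (Pi.basisFun ℝ (Fin k)) σ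
    have h2 := ((LinearMap.toSpanSingleton ℝ _ (tp k)).compAlternatingMap
      (Pi.basisFun ℝ (Fin k)).det).map_perm (Pi.basisFun ℝ (Fin k)) σ
    refine h1.trans (Eq.trans ?_ h2.symm)
    congr 1
    have h3 : ⇑(Pi.basisFun ℝ (Fin k)) = e k := by ext i; simp [e]
    rw [LinearMap.compAlternatingMap_apply, Module.Basis.det_self, h3]
    simp [tp]
  exact DFunLike.congr_fun this v

lemma tp_ne (k : ℕ) : tp k ≠ 0 := by
  intro h
  have h3 : ⇑(Pi.basisFun ℝ (Fin k)) = e k := by ext i; simp [e]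
  let F : ∀ i, (Fin k → ℝ) [⋀^Fin i]→ₗ[ℝ] ℝ := fun i =>
    if hi : k = i then hi ▸ (Pi.basisFun ℝ (Fin k)).det else 0
  have h2 := liftAlternating_apply_ιMulti F (e k)
  change liftAlternating F (tp k) = _ at h2
  rw [h, map_zero, ← h3] at h2
  have h4 : F k = (Pi.basisFun ℝ (Fin k)).det := by simp only [F, dif_pos]
  rw [h4, Module.Basis.det_self] at h2
  exact zero_ne_one h2

lemma koszulTop_eq (k : ℕ) : koszulTop k = tp k ⊗ₜ[ℝ] 1 := rfl

lemma koszulMul_tmul (k : ℕ) (a : ExteriorAlgebra ℝ (Fin k → ℝ)) (f : MvPolynomial (Fin k) ℝ) :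
    koszulMul k (a ⊗ₜ f) = ∑ i, (ι ℝ (e k i) * a) ⊗ₜ[ℝ] (X i * f) := by
  simp [koszulMul, koszulElt, Finset.sum_mul, e]

lemma sq_zero (k : ℕ) : koszulMul k ∘ₗ koszulMul k = 0 := by
  apply TensorProduct.ext'
  intro a f
  simp only [LinearMap.comp_apply, koszulMul_tmul, map_sum, LinearMap.zero_apply]
  set S := ∑ x, ∑ i, (ι ℝ (e k i) * (ι ℝ (e k x) * a)) ⊗ₜ[ℝ] (X i * (X x * f)) with hS
  have : S = -S := by
    conv_lhs => rw [hS, Finset.sum_comm]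
    rw [hS]
    simp only [← Finset.sum_neg_distrib]
    refine Finset.sum_congr rfl fun i _ => Finset.sum_congr rfl fun j _ => ?_
    rw [← mul_assoc, anti, neg_mul, TensorProduct.neg_tmul, mul_assoc, mul_left_comm (X i)]
  have h2 : (2 : ℝ) • S = 0 := by rw [two_smul]; nth_rewrite 1 [this]; simp
  exact (smul_eq_zero.1 h2).resolve_left two_ne_zero

noncomputable def D (k : ℕ) :
    ExteriorAlgebra ℝ (Fin k → ℝ) ⊗[ℝ] MvPolynomial (Fin k) ℝ →ₗ[ℝ]
      ExteriorAlgebra ℝ (Fin k → ℝ) ⊗[ℝ] MvPolynomial (Fin k) ℝ :=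
  ∑ i, TensorProduct.map (con k i) (pderiv (R := ℝ) i).toLinearMap

lemma D_tmul (k : ℕ) (a : ExteriorAlgebra ℝ (Fin k → ℝ)) (f : MvPolynomial (Fin k) ℝ) :
    D k (a ⊗ₜ f) = ∑ i, (con k i a) ⊗ₜ[ℝ] (pderiv i f) := by
  simp [D, LinearMap.sum_apply]

noncomputable def H (k : ℕ) : Module.End ℝ
    (ExteriorAlgebra ℝ (Fin k → ℝ) ⊗[ℝ] MvPolynomial (Fin k) ℝ) :=
  koszulMul k ∘ₗ D k + D k ∘ₗ koszulMul k

lemma H_tmul (k : ℕ) (a : ExteriorAlgebra ℝ (Fin k → ℝ)) (f : MvPolynomial (Fin k) ℝ) :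
    H k (a ⊗ₜ f) = a ⊗ₜ (∑ i, X i * pderiv i f) + (k : ℝ) • (a ⊗ₜ[ℝ] f)
      - (∑ i, ι ℝ (e k i) * con k i a) ⊗ₜ f := by
  have key : ∀ i j, (ι ℝ (e k i) * con k j a) ⊗ₜ[ℝ] (X i * pderiv j f)
      + con k j (ι ℝ (e k i) * a) ⊗ₜ[ℝ] pderiv j (X i * f)
      = if i = j then a ⊗ₜ (X i * pderiv i f) + a ⊗ₜ[ℝ] f - (ι ℝ (e k i) * con k i a) ⊗ₜ f
        else 0 := by
    intro i j
    rw [con_mul, Derivation.leibniz, pderiv_X]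
    by_cases h : i = j
    · subst h
      simp [e, TensorProduct.sub_tmul, TensorProduct.tmul_add]
      abel
    · simp [e, h, TensorProduct.neg_tmul, Ne.symm h]
  simp only [H, LinearMap.add_apply, LinearMap.comp_apply, koszulMul_tmul, D_tmul, map_sum]
  rw [Finset.sum_comm, ← Finset.sum_add_distrib]
  simp only [← Finset.sum_add_distrib, key]
  simp [Finset.sum_add_distrib, Finset.sum_sub_distrib, TensorProduct.tmul_sum,
    TensorProduct.sum_tmul, Nat.cast_smul_eq_nsmul]

lemma H_mono (k p : ℕ) (v : Fin p → Fin k → ℝ) (s : Fin k →₀ ℕ) (c : ℝ) :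
    H k (ιMulti ℝ p v ⊗ₜ monomial s c)
      = ((s.degree : ℝ) + k - p) • (ιMulti ℝ p v ⊗ₜ[ℝ] monomial s c) := by
  rw [H_tmul, num_mul, (isHomogeneous_monomial c rfl).sum_X_mul_pderiv,
    ← Nat.cast_smul_eq_nsmul ℝ, TensorProduct.tmul_smul, ← TensorProduct.smul_tmul',
    ← add_smul]
  exact (sub_smul _ _ _).symm

lemma H_comm (k : ℕ) (x) : H k (koszulMul k x) = koszulMul k (H k x) := by
  have h := fun x => LinearMap.congr_fun (sq_zero k) x
  simp only [LinearMap.comp_apply, LinearMap.zero_apply] at h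
  simp [H, h]

noncomputable def W (k : ℕ) : Submodule ℝ
    (ExteriorAlgebra ℝ (Fin k → ℝ) ⊗[ℝ] MvPolynomial (Fin k) ℝ) :=
  ⨆ n : ℕ, (H k).eigenspace ((n : ℝ) + 1)

lemma mono_mem (k p : ℕ) (v : Fin p → Fin k → ℝ) (s : Fin k →₀ ℕ) (c : ℝ) :
    ιMulti ℝ p v ⊗ₜ[ℝ] monomial s c ∈ (ℝ ∙ koszulTop k) ⊔ W k := by
  rcases lt_or_ge k p with h | h
  · rw [top_zero k p h]; simp
  by_cases h0 : s.degree + (k - p) = 0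
  · obtain rfl : p = k := by omega
    have hs : s = 0 := (Finsupp.degree_eq_zero_iff s).1 (by omega)
    apply Submodule.mem_sup_left
    rw [Submodule.mem_span_singleton]
    refine ⟨(Pi.basisFun ℝ (Fin p)).det v * c, ?_⟩
    rw [hs, top_det, koszulTop_eq, ← mul_one c, ← smul_eq_mul c 1, ← smul_monomial, 
      TensorProduct.tmul_smul, ← TensorProduct.smul_tmul', smul_smul]
    simp [mul_comm]
  · apply Submodule.mem_sup_right
    refine Submodule.mem_iSup_of_mem (s.degree + (k - p) - 1) ?_
    rw [Module.End.mem_eigenspace_iff, H_mono]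
    congr 1
    rw [Nat.cast_sub (by omega)]
    push_cast [h]
    ring

lemma all_mem (k : ℕ) (x) : x ∈ (ℝ ∙ koszulTop k) ⊔ W k := by
  induction x with
  | zero => simp
  | add x y hx hy => exact add_mem hx hy
  | tmul a f =>
    induction f using MvPolynomial.induction_on' with
    | add p q hp hq => rw [TensorProduct.tmul_add]; exact add_mem hp hq
    | monomial s c =>
      have ha : a ∈ Submodule.span ℝ (Set.range fun x : Σ n, (Fin n → (Fin k → ℝ)) =>
          ιMulti ℝ x.1 x.2) := by
        rw [ιMulti_span]; trivial
      induction ha using Submodule.span_induction with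
      | mem a h => obtain ⟨⟨p, v⟩, rfl⟩ := h; exact mono_mem k p v s c
      | zero => simp
      | add x y _ _ hx hy => rw [TensorProduct.add_tmul]; exact add_mem hx hy
      | smul r x _ hx => rw [← TensorProduct.smul_tmul']; exact Submodule.smul_mem _ _ hx

lemma W_ker (k : ℕ) (y) (hy : y ∈ W k) (h : koszulMul k y = 0) :
    y ∈ LinearMap.range (koszulMul k) := by
  obtain ⟨f, hf, rfl⟩ := (Submodule.mem_iSup_iff_exists_finsupp _ _).1 hy
  have ind : iSupIndep fun n : ℕ => (H k).eigenspace ((n : ℝ) + 1) :=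
    (H k).eigenspaces_iSupIndep.comp (f := fun n : ℕ => (n : ℝ) + 1)
      (fun a b hab => by simpa using hab)
  rw [iSupIndep_iff_finsetSum_eq_zero_imp_eq_zero] at ind
  rw [Finsupp.sum, map_sum] at h
  have h0 := ind f.support (fun n => koszulMul k (f n)) (fun n _ => by
    have := hf n
    rw [Module.End.mem_eigenspace_iff] at this ⊢
    rw [H_comm, this, map_smul]) h
  refine Submodule.sum_mem _ fun n hn => ?_
  have h1 := hf n
  rw [Module.End.mem_eigenspace_iff] at h1
  have h2 := h0 n hn
  simp only [H, LinearMap.add_apply, LinearMap.comp_apply] at h1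
  rw [h2, map_zero, add_zero] at h1
  refine ⟨((n : ℝ) + 1)⁻¹ • D k (f n), ?_⟩
  rw [map_smul, h1, smul_smul, inv_mul_cancel₀ (by positivity), one_smul]

lemma top_ker (k : ℕ) : koszulMul k (koszulTop k) = 0 := by
  rw [koszulTop_eq, koszulMul_tmul]
  refine Finset.sum_eq_zero fun i _ => ?_
  have := ιMulti_succ_apply (R := ℝ) (Matrix.vecCons (e k i) (e k))
  rw [top_zero k _ (Nat.lt_succ_self k)] at this
  simp only [Matrix.cons_val_zero, Matrix.tail_cons] at this
  rw [tp, ← this, TensorProduct.zero_tmul]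

lemma top_not_range (k : ℕ) : koszulTop k ∉ LinearMap.range (koszulMul k) := by
  rintro ⟨y, hy⟩
  let φ := (TensorProduct.rid ℝ (ExteriorAlgebra ℝ (Fin k → ℝ))).toLinearMap ∘ₗ
    TensorProduct.map LinearMap.id (MvPolynomial.aeval (R := ℝ) (fun _ : Fin k => (0 : ℝ))).toLinearMap
  have h : φ ∘ₗ koszulMul k = 0 := by
    apply TensorProduct.ext'
    intro a f
    simp [koszulMul_tmul, φ]
  have h2 := LinearMap.congr_fun h y
  rw [LinearMap.comp_apply, hy, koszulTop_eq] at h2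
  simp [φ] at h2
  exact tp_ne k h2

lemma ker_eq (k : ℕ) : LinearMap.ker (koszulMul k)
      = LinearMap.range (koszulMul k) ⊔ (ℝ ∙ koszulTop k) := by
  apply le_antisymm
  · intro x hx
    obtain ⟨t, ht, y, hy, rfl⟩ := Submodule.mem_sup.1 (all_mem k x)
    rw [sup_comm]
    refine Submodule.add_mem_sup ht (W_ker k y hy ?_)
    obtain ⟨c, rfl⟩ := Submodule.mem_span_singleton.1 ht
    simpa [top_ker] using hx
  · refine sup_le ?_ ?_
    · rintro _ ⟨y, rfl⟩
      exact LinearMap.congr_fun (sq_zero k) y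
    · rw [Submodule.span_singleton_le_iff_mem]
      exact top_ker k

lemma map_eq (k : ℕ) :
    Submodule.map (LinearMap.range (koszulMul k)).mkQ (LinearMap.ker (koszulMul k))
      = (ℝ ∙ ((LinearMap.range (koszulMul k)).mkQ (koszulTop k))) := by
  rw [ker_eq, Submodule.map_sup, Submodule.mkQ_map_self, bot_sup_eq, Submodule.map_span,
    Set.image_singleton]

end BerAux

/-- Section 1.8 of the paper: the homology of `(K(V), d_V)` with `V = ℝ^(0,k)` is
one-dimensional, spanned by the class of the top product.  (i) `d_V ∘ d_V = 0`;
(ii) the top product is a cycle and not a boundary; (iii) every cycle is a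
boundary plus a real multiple of the top product; consequently the quotient
`ker d_V / range d_V` (realized as the image of the kernel in the quotient by the
range) is one-dimensional, spanned by the class of the top product. -/
theorem berezinian_module_computation (k : ℕ) :
    (koszulMul k ∘ₗ koszulMul k = 0) ∧
    (koszulTop k ∈ LinearMap.ker (koszulMul k) ∧
      koszulTop k ∉ LinearMap.range (koszulMul k)) ∧
    (LinearMap.ker (koszulMul k)
      = LinearMap.range (koszulMul k) ⊔ (ℝ ∙ koszulTop k)) ∧
    (Submodule.map (LinearMap.range (koszulMul k)).mkQ (LinearMap.ker (koszulMul k))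
      = (ℝ ∙ ((LinearMap.range (koszulMul k)).mkQ (koszulTop k)))) ∧
    Module.finrank ℝ
      (Submodule.map (LinearMap.range (koszulMul k)).mkQ
        (LinearMap.ker (koszulMul k))) = 1 := by
  refine ⟨BerAux.sq_zero k, ⟨BerAux.top_ker k, BerAux.top_not_range k⟩, BerAux.ker_eq k,
    BerAux.map_eq k, ?_⟩
  rw [BerAux.map_eq k]
  apply finrank_span_singleton
  intro h
  exact BerAux.top_not_range k ((Submodule.Quotient.mk_eq_zero _).1 h)
end

section
/- Let n be a natural number and let Λ = ExteriorAlgebra ℝ (Fin n → ℝ), with e₁, …, eₙ the standard basis of ℝⁿ. For a linear functional d on ℝⁿ let ∂_d : Λ → Λ denote left contraction (interior product) by d, i.e. the unique ℝ-linear operator satisfying ∂_d(1) = 0, ∂_d(ι x) = d(x)·1 for x ∈ ℝⁿ, and ∂_d(ι x · ω) = d(x)·ω − ι x · ∂_d(ω) for all ω ∈ Λ. Let T : Λ → ℝ be a linear map such that T(∂_d(ω)) = 0 for every linear functional d on ℝⁿ and every ω ∈ Λ, and such that T(ι e₁ · ι e₂ ⋯ ι eₙ) = 0. Then T = 0. (Hence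 linear functionals vanishing on all contractions form a space of dimension at most one.) -/
/-- Section 3.1, uniqueness of the Berezin integral on a purely odd space: a linear
functional `T` on `Λ(ℝⁿ)` vanishing on all left contractions `∂_d ω` and on the top
product `ι e₁ ⋯ ι eₙ` is zero. -/
theorem berezin_integral_uniqueness
    (n : ℕ)
    (D : Module.Dual ℝ (Fin n → ℝ) →
      ExteriorAlgebra ℝ (Fin n → ℝ) →ₗ[ℝ] ExteriorAlgebra ℝ (Fin n → ℝ))
    (hD1 : ∀ d, D d 1 = 0)
    (hD2 : ∀ d x, D d (ExteriorAlgebra.ι ℝ x) = d x • (1 : ExteriorAlgebra ℝ (Fin n → ℝ)))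
    (hD3 : ∀ d x ω, D d (ExteriorAlgebra.ι ℝ x * ω)
      = d x • ω - ExteriorAlgebra.ι ℝ x * D d ω)
    (T : ExteriorAlgebra ℝ (Fin n → ℝ) →ₗ[ℝ] ℝ)
    (hT : ∀ d ω, T (D d ω) = 0)
    (hTop : T ((List.ofFn fun i : Fin n =>
      ExteriorAlgebra.ι ℝ (Pi.single i 1 : Fin n → ℝ))).prod = 0) :
    T = 0 := by
  have key : ∀ (d : Module.Dual ℝ (Fin n → ℝ)) (m : ℕ) (v : Fin m → (Fin n → ℝ)),
      (∀ j, d (v j) = 0) → D d (ExteriorAlgebra.ιMulti ℝ m v) = 0 := by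
    intro d m
    induction m with
    | zero => intro v _; rw [ExteriorAlgebra.ιMulti_zero_apply]; exact hD1 d
    | succ m ih =>
      intro v hv
      rw [ExteriorAlgebra.ιMulti_succ_apply, hD3, hv 0, ih (Matrix.vecTail v) (fun j => hv j.succ)]
      simp
  apply (Pi.basisFun ℝ (Fin n)).ExteriorAlgebra.ext
  intro s
  rw [LinearMap.zero_apply]
  by_cases hs : s = Finset.univ
  · have hc : s.card = n := by rw [hs]; simp
    rw [ExteriorAlgebra.basis_apply_ofCard _ hc, ExteriorAlgebra.ιMulti_family,
      ExteriorAlgebra.ιMulti_apply, ← hTop]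
    congr 3
    ext1 i
    have he : (RelEmbedding.refl _ : Fin n ↪o Fin n) =
        Set.powersetCard.ofFinEmbEquiv.symm (Set.powersetCard.ofCard hc) :=
      Finset.orderEmbOfFin_unique' hc (fun x => by rw [hs]; exact Finset.mem_univ _)
    rw [Function.comp_apply, Pi.basisFun_apply, ← he]
    rfl
  · obtain ⟨i, hi⟩ : ∃ i, i ∉ s := by
      by_contra! h
      exact hs (Finset.eq_univ_iff_forall.2 h)
    have h0 : D (LinearMap.proj i) ((Pi.basisFun ℝ (Fin n)).ExteriorAlgebra s) = 0 := by
      rw [ExteriorAlgebra.basis_apply_ofCard _ rfl, ExteriorAlgebra.ιMulti_family]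
      apply key
      intro j
      rw [Function.comp_apply, Pi.basisFun_apply, LinearMap.proj_apply]
      apply Pi.single_eq_of_ne
      rintro rfl
      apply hi
      exact (Set.powersetCard.mem_range_ofFinEmbEquiv_symm_iff_mem (Set.powersetCard.ofCard rfl) _).1 ⟨j, rfl⟩
    have h := hT (LinearMap.proj i)
      (ExteriorAlgebra.ι ℝ (Pi.single i 1) * (Pi.basisFun ℝ (Fin n)).ExteriorAlgebra s)
    rw [hD3, h0] at h
    simpa using h
end

section
/- Let φ : ℝ → ℂ be a smooth compactly supported function with φ(0) = 0, and let g : ℝ → ℂ be the continuous function g(z) = φ(z)/z for z ≠ 0 and g(0) = φ′(0). Define F : ℝ → ℂ by F(w) = ∫_ℝ g(z) · exp(−i·w/z) dz, the integrand being set to 0 at z = 0. Then F is rapidly decreasing: for every N ∈ ℕ there exists C ≥ 0 such that (1 + |w|)^N · |F(w)| ≤ C for all w ∈ ℝ. -/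
open MeasureTheory

noncomputable def thomE (w z : ℝ) : ℂ :=
  if z = 0 then 0 else Complex.exp (-Complex.I * ((w : ℂ) / (z : ℂ)))

lemma thomE_norm_le (w z : ℝ) : ‖thomE w z‖ ≤ 1 := by
  unfold thomE
  split_ifs
  · simp
  · have : -Complex.I * ((w : ℂ) / (z : ℂ)) = ((-(w / z) : ℝ) : ℂ) * Complex.I := by
      push_cast; ring
    rw [this, Complex.norm_exp_ofReal_mul_I]

lemma thomE_meas (w : ℝ) : Measurable (thomE w) := by
  unfold thomE
  apply Measurable.ite (measurableSet_eq) measurable_const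
  fun_prop

lemma thom_int {g : ℝ → ℂ} (hg : Integrable g) (w : ℝ) :
    Integrable (fun z => g z * thomE w z) := by
  refine hg.mul_bdd (c := 1) (thomE_meas w).aestronglyMeasurable ?_
  exact Filter.Eventually.of_forall (thomE_norm_le w)

lemma thom_bound {g : ℝ → ℂ} (hg : Integrable g) (w : ℝ) :
    ‖∫ z, g z * thomE w z‖ ≤ ∫ z, ‖g z‖ := by
  refine norm_integral_le_of_norm_le hg.norm (Filter.Eventually.of_forall fun z => ?_)
  rw [norm_mul]
  exact mul_le_of_le_one_right (norm_nonneg _) (thomE_norm_le w z)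

lemma thomE_deriv (w z : ℝ) (hz : z ≠ 0) :
    HasDerivAt (thomE w) (Complex.I * w / z ^ 2 * thomE w z) z := by
  have hz' : (z : ℂ) ≠ 0 := by exact_mod_cast hz
  have h1 : HasDerivAt (fun x : ℝ => (x : ℂ)) 1 z := Complex.ofRealCLM.hasDerivAt
  have h2 : HasDerivAt (fun x : ℝ => Complex.exp (-Complex.I * ((w : ℂ) / (x : ℂ))))
      (Complex.I * w / z ^ 2 * thomE w z) z := by
    have := (((hasDerivAt_const z (w : ℂ)).div h1 hz').const_mul (-Complex.I)).cexp
    refine HasDerivAt.congr_deriv this ?_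
    have e : thomE w z = Complex.exp (-Complex.I * ((w : ℂ) / (z : ℂ))) := by
      simp [thomE, hz]
    rw [e]
    simp only [Pi.div_apply]
    ring
  refine h2.congr_of_eventuallyEq ?_
  filter_upwards [isOpen_ne.mem_nhds hz] with x hx
  have hx' : x ≠ 0 := hx
  simp [thomE, hx']

lemma thom_step {p g : ℝ → ℂ} (hp : Differentiable ℝ p) (hpi : Integrable p)
    (hp' : Integrable (deriv p)) (hg : Integrable g) (hpg : ∀ z, p z = z ^ 2 * g z)
    (h0 : deriv p 0 = 0) (w : ℝ) :
    Complex.I * w * (∫ z, g z * thomE w z) = -∫ z, deriv p z * thomE w z := by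
  have key : ∫ z, (deriv p z * thomE w z + Complex.I * w * (g z * thomE w z)) = 0 := by
    refine integral_eq_zero_of_hasDerivAt_of_integrable (f := fun z => p z * thomE w z) ?_
      ((thom_int hp' w).add ((thom_int hg w).const_mul _)) (thom_int hpi w)
    intro z
    by_cases hz : z = 0
    · subst hz
      have hd := (hp 0).hasDerivAt
      have hp0 : p 0 = 0 := by simp [hpg]
      rw [h0, hasDerivAt_iff_isLittleO] at hd
      rw [hasDerivAt_iff_isLittleO]
      refine Asymptotics.IsBigO.trans_isLittleO ?_ hd
      refine Asymptotics.IsBigO.of_bound 1 (Filter.Eventually.of_forall fun z => ?_)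
      have e0 : thomE w 0 = 0 := by simp [thomE]
      simpa [hp0, h0, e0] using mul_le_of_le_one_right (norm_nonneg (p z)) (thomE_norm_le w z)
    · have hz' : (z : ℂ) ≠ 0 := by exact_mod_cast hz
      refine HasDerivAt.congr_deriv ((hp z).hasDerivAt.mul (thomE_deriv w z hz)) ?_
      rw [hpg]
      field_simp
  rw [integral_add (thom_int hp' w) ((thom_int hg w).const_mul _),
    integral_const_mul] at key
  linear_combination key

lemma thom_succ {p g : ℝ → ℂ} (hp : Differentiable ℝ p) (hpi : Integrable p)
    (hp' : Integrable (deriv p)) (hg : Integrable g) (hpg : ∀ z, p z = z ^ 2 * g z)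
    (h0 : deriv p 0 = 0)
    (H : ∀ N : ℕ, ∃ C : ℝ, 0 ≤ C ∧ ∀ w : ℝ,
      (1 + |w|) ^ N * ‖∫ z, deriv p z * thomE w z‖ ≤ C) :
    ∀ N : ℕ, ∃ C : ℝ, 0 ≤ C ∧ ∀ w : ℝ, (1 + |w|) ^ N * ‖∫ z, g z * thomE w z‖ ≤ C := by
  intro N
  induction N with
  | zero =>
    exact ⟨∫ z, ‖g z‖, by positivity, fun w => by simpa using thom_bound hg w⟩
  | succ N ih =>
    obtain ⟨C, hC, h⟩ := ih
    obtain ⟨D, hD, h'⟩ := H N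
    refine ⟨C + D, by positivity, fun w => ?_⟩
    have e : |w| * ‖∫ z, g z * thomE w z‖ = ‖∫ z, deriv p z * thomE w z‖ := by
      have := congrArg norm (thom_step hp hpi hp' hg hpg h0 w)
      simpa using this
    calc _ = (1 + |w|) ^ N * ‖∫ z, g z * thomE w z‖
          + (1 + |w|) ^ N * (|w| * ‖∫ z, g z * thomE w z‖) := by ring
      _ ≤ C + D := by rw [e]; exact add_le_add (h w) (h' w)

lemma thom_smooth (N : ℕ) : ∀ g : ℝ → ℂ, ContDiff ℝ (⊤ : ℕ∞) g → HasCompactSupport g →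
    ∃ C : ℝ, 0 ≤ C ∧ ∀ w : ℝ, (1 + |w|) ^ N * ‖∫ z, g z * thomE w z‖ ≤ C := by
  induction N with
  | zero =>
    intro g hg hs
    have hi := hg.continuous.integrable_of_hasCompactSupport (μ := volume) hs
    exact ⟨∫ z, ‖g z‖, by positivity, fun w => by simpa using thom_bound hi w⟩
  | succ N ih =>
    intro g hg hs
    have hi := hg.continuous.integrable_of_hasCompactSupport (μ := volume) hs
    have hc : ContDiff ℝ (⊤ : ℕ∞) (fun z : ℝ => (z : ℂ)) := Complex.ofRealCLM.contDiff
    set p : ℝ → ℂ := fun z => (z : ℂ) ^ 2 * g z with hpdef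
    have hp : ContDiff ℝ (⊤ : ℕ∞) p := (hc.pow 2).mul hg
    have hps : HasCompactSupport p := hs.mul_left
    have hp' : ContDiff ℝ (⊤ : ℕ∞) (deriv p) := (contDiff_infty_iff_deriv.1 hp).2
    have h0 : deriv p 0 = 0 := by
      have h1 : HasDerivAt (fun x : ℝ => (x : ℂ)) 1 0 := Complex.ofRealCLM.hasDerivAt
      have := ((h1.pow 2).mul (hg.differentiable (by simp) 0).hasDerivAt).deriv
      refine Eq.trans this ?_
      simp
    obtain ⟨C, hC, h⟩ := ih g hg hs
    obtain ⟨D, hD, h'⟩ := ih _ hp' hps.deriv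
    refine ⟨C + D, by positivity, fun w => ?_⟩
    have e : |w| * ‖∫ z, g z * thomE w z‖ = ‖∫ z, deriv p z * thomE w z‖ := by
      have := congrArg norm (thom_step (hp.differentiable (by simp))
        (hp.continuous.integrable_of_hasCompactSupport hps)
        (hp'.continuous.integrable_of_hasCompactSupport hps.deriv) hi (fun _ => rfl) h0 w)
      simpa using this
    calc _ = (1 + |w|) ^ N * ‖∫ z, g z * thomE w z‖
          + (1 + |w|) ^ N * (|w| * ‖∫ z, g z * thomE w z‖) := by ring
      _ ≤ C + D := by rw [e]; exact add_le_add (h w) (h' w)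

/-- Example at the end of Section 5: for `φ` smooth, compactly supported, with
`φ 0 = 0`, the function `F w = ∫ (φ z / z) exp(-i w / z) dz` is rapidly
decreasing in `w`. -/
theorem rapid_decrease_thom_example
    (φ : ℝ → ℂ) (hφ : ContDiff ℝ (⊤ : ℕ∞) φ) (hsupp : HasCompactSupport φ)
    (h0 : φ 0 = 0)
    (g : ℝ → ℂ) (hg : ∀ z : ℝ, z ≠ 0 → g z = φ z / z) (hg0 : g 0 = deriv φ 0)
    (F : ℝ → ℂ)
    (hF : ∀ w : ℝ, F w = ∫ z : ℝ,
      if z = 0 then 0 else g z * Complex.exp (-Complex.I * ((w : ℂ) / (z : ℂ)))) :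
    ∀ N : ℕ, ∃ C : ℝ, 0 ≤ C ∧ ∀ w : ℝ, (1 + |w|) ^ N * ‖F w‖ ≤ C := by
  have hF' : ∀ w, F w = ∫ z, g z * thomE w z := by
    intro w
    rw [hF]
    congr 1
    ext z
    by_cases hz : z = 0 <;> simp [thomE, hz]
  simp only [hF']
  have hc : ContDiff ℝ (⊤ : ℕ∞) (fun z : ℝ => (z : ℂ)) := Complex.ofRealCLM.contDiff
  have hgd : g = dslope φ 0 := by
    ext z
    by_cases hz : z = 0
    · subst hz; simp [hg0]
    · rw [hg z hz, dslope_of_ne _ hz, slope_def_module, h0]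
      simp [div_eq_inv_mul]
  have hgc : Continuous g := by
    rw [hgd, continuous_iff_continuousAt]
    intro z
    by_cases hz : z = 0
    · subst hz
      exact continuousAt_dslope_same.2 (hφ.differentiable (by simp) 0)
    · exact (continuousAt_dslope_of_ne hz).2 hφ.continuous.continuousAt
  have hgs : HasCompactSupport g := by
    refine HasCompactSupport.intro (K := tsupport φ ∪ {0})
      (hsupp.isCompact.union isCompact_singleton) ?_
    intro z hz
    simp only [Set.mem_union, Set.mem_singleton_iff, not_or] at hz
    rw [hg z hz.2, image_eq_zero_of_notMem_tsupport hz.1, zero_div]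
  set p : ℝ → ℂ := fun z => (z : ℂ) * φ z with hpdef
  have hp : ContDiff ℝ (⊤ : ℕ∞) p := hc.mul hφ
  have hps : HasCompactSupport p := hsupp.mul_left
  have hp' : ContDiff ℝ (⊤ : ℕ∞) (deriv p) := (contDiff_infty_iff_deriv.1 hp).2
  have hp0 : deriv p 0 = 0 := by
    have h1 : HasDerivAt (fun x : ℝ => (x : ℂ)) 1 0 := Complex.ofRealCLM.hasDerivAt
    have := (h1.mul (hφ.differentiable (by simp) 0).hasDerivAt).deriv
    refine Eq.trans this ?_
    simp [h0]
  refine thom_succ (hp.differentiable (by simp))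
        (hp.continuous.integrable_of_hasCompactSupport hps)
        (hp'.continuous.integrable_of_hasCompactSupport hps.deriv)
        (hgc.integrable_of_hasCompactSupport hgs) ?_ hp0
        (fun N => thom_smooth N _ hp' hps.deriv)
  intro z
  by_cases hz : z = 0
  · simp [hpdef, hz]
  · have hz' : (z : ℂ) ≠ 0 := by exact_mod_cast hz
    rw [hg z hz]
    simp only [hpdef]
    field_simp
end

section
/- Let n ≤ N be natural numbers, let Λ = ExteriorAlgebra ℝ (Fin N → ℝ), and let Λ_odd ⊆ Λ be the odd part of Λ, i.e. the span of all products of an odd number of generators ι x with x ∈ ℝ^N. Let W be a real vector space and let c : Finset (Fin n) → W. Suppose that for every function a : Fin n → Λ with a(i) ∈ Λ_odd for all i, one has Σ_{I ⊆ Fin n} (∏_{i ∈ I} a(i)) ⊗ c(I) = 0 in Λ ⊗_ℝ W, where the product over I is taken in increasing order of the indices. Then c(I) = 0 for every I ⊆ Fin n. -/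
open scoped TensorProduct

theorem aux_basis_prod {N : ℕ} (b : Module.Basis (Fin N) ℝ (Fin N → ℝ)) (s : Finset (Fin N)) :
    b.ExteriorAlgebra s = (s.sort.map (fun i => ExteriorAlgebra.ι ℝ (b i))).prod := by
  rw [ExteriorAlgebra.basis_apply_ofCard b (rfl : s.card = s.card),
    ← Finset.listMap_orderEmbOfFin_finRange s rfl, ExteriorAlgebra.ιMulti_family,
    ExteriorAlgebra.ιMulti_apply, Set.powersetCard.ofFinEmbEquiv_symm_apply, List.map_map,
    List.ofFn_eq_map]
  rfl

/-- Section 1.5.1: injectivity of `φ ↦ φ_P` for `P = Λℝᴺ` with `N ≥ n`.  If the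
coefficients `c I ∈ W` of `φ = Σ_I ξ^I c_I` satisfy
`Σ_I (∏_{i ∈ I} a i) ⊗ c I = 0` for every substitution of odd elements
`a i` of the exterior algebra `Λ(ℝᴺ)` for the odd coordinates, then all the
coefficients vanish. -/
theorem odd_substitution_injectivity
    (n N : ℕ) (hnN : n ≤ N)
    (W : Type*) [AddCommGroup W] [Module ℝ W]
    (c : Finset (Fin n) → W)
    (hsub : ∀ a : Fin n → ExteriorAlgebra ℝ (Fin N → ℝ),
      (∀ i : Fin n, a i ∈ Submodule.span ℝ
        {x : ExteriorAlgebra ℝ (Fin N → ℝ) | ∃ l : List (Fin N → ℝ),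
          Odd l.length ∧ x = (l.map (ExteriorAlgebra.ι ℝ)).prod}) →
      ∑ I : Finset (Fin n), (((I.sort (· ≤ ·)).map a).prod) ⊗ₜ[ℝ] c I = 0) :
    ∀ I : Finset (Fin n), c I = 0 := by
  intro J
  let b := Pi.basisFun ℝ (Fin N)
  let e : Fin n ↪ Fin N := (Fin.castLEEmb hnN)
  have key := hsub (fun i => ExteriorAlgebra.ι ℝ (b (e i))) (fun i =>
    Submodule.subset_span ⟨[b (e i)], by simp, by simp⟩)
  have hp : ∀ I : Finset (Fin n), ((I.sort (· ≤ ·)).map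
      (fun i => ExteriorAlgebra.ι ℝ (b (e i)))).prod = b.ExteriorAlgebra (I.map e) := by
    intro I
    rw [aux_basis_prod, ← Finset.map_sort (r := (· ≤ ·)) e I (hs := fun _ _ _ _ => Iff.rfl),
      List.map_map]
    rfl
  simp only [hp] at key
  have h2 := congrArg (fun t => TensorProduct.lid ℝ W
    (TensorProduct.map (b.ExteriorAlgebra.coord (J.map e)) LinearMap.id t)) key
  simpa [Finsupp.single_apply, Finset.sum_ite_eq] using h2
end
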